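/- The complex Δ has a face of cardinality n if and only if the CNF formula φ is satisfiable. -/

import Mathlib

/-- For a clause `C` (a finite set of literals `(j,b)`), the circuit
`C' = {(j, ¬b) : (j,b) ∈ C}`. -/
def clauseDual {n : ℕ} (C : Finset (Fin n × Bool)) : Finset (Fin n × Bool) :=
  C.image (fun l => (l.1, !l.2))

/-- The circuit `P i = {t_i, f_i}`. -/
def pairCircuit {n : ℕ} (i : Fin n) : Finset (Fin n × Bool) :=
  {(i, true), (i, false)}

/-- `S` is a face of the complex `Δ` associated with the CNF formula `φ`:
it contains none of the circuits `C₁', …, C_m', P₁, …, P_n`. -/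
def IsFace {n m : ℕ} (φ : Fin m → Finset (Fin n × Bool)) (S : Finset (Fin n × Bool)) : Prop :=
  (∀ k, ¬ clauseDual (φ k) ⊆ S) ∧ (∀ i, ¬ pairCircuit i ⊆ S)

/-- The set `S_a = {(i, a i) : i}` associated with a truth assignment `a`. -/
def assignFace {n : ℕ} (a : Fin n → Bool) : Finset (Fin n × Bool) :=
  Finset.univ.image (fun i => (i, a i))

/-- The assignment `a` satisfies the clause `C`. -/
def SatisfiesClause {n : ℕ} (a : Fin n → Bool) (C : Finset (Fin n × Bool)) : Prop :=
  ∃ l ∈ C, a l.1 = l.2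

/-- The assignment `a` satisfies every clause of the CNF formula `φ`. -/
def Satisfies {n m : ℕ} (φ : Fin m → Finset (Fin n × Bool)) (a : Fin n → Bool) : Prop :=
  ∀ k, SatisfiesClause a (φ k)

/-!
A set of literals containing no complementary pair `P i` is consistent, so it lies in the graph
`S_a` of some assignment `a`. As `S_a` has exactly `n` elements, the consistent sets of cardinality
`n` are the graphs themselves, and `S_a` contains `C'` exactly when `a` falsifies every literal of
`C`. Hence the faces of cardinality `n` are the graphs of the satisfying assignments.
-/

section

variable {n m : ℕ} {φ : Fin m → Finset (Fin n × Bool)} {a : Fin n → Bool}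
  {C S : Finset (Fin n × Bool)}

theorem mem_assignFace {l : Fin n × Bool} : l ∈ assignFace a ↔ a l.1 = l.2 := by
  obtain ⟨i, b⟩ := l
  simp [assignFace]

theorem card_assignFace (a : Fin n → Bool) : (assignFace a).card = n := by
  have graph_injective : Function.Injective fun i => (i, a i) :=
    fun _ _ h => congrArg Prod.fst h
  rw [assignFace, Finset.card_image_of_injective _ graph_injective, Finset.card_fin]

theorem clauseDual_subset_assignFace_iff :
    clauseDual C ⊆ assignFace a ↔ ¬ SatisfiesClause a C := by
  simp only [clauseDual, SatisfiesClause, Finset.image_subset_iff, mem_assignFace, not_exists,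
    not_and, Bool.eq_not]

theorem pairCircuit_subset_iff {i : Fin n} :
    pairCircuit i ⊆ S ↔ (i, true) ∈ S ∧ (i, false) ∈ S := by
  simp only [pairCircuit, Finset.insert_subset_iff, Finset.singleton_subset_iff]

theorem forall_not_pairCircuit_subset_iff :
    (∀ i, ¬ pairCircuit i ⊆ S) ↔ ∃ a : Fin n → Bool, S ⊆ assignFace a := by
  simp only [pairCircuit_subset_iff, not_and]
  constructor
  · intro consistent
    refine ⟨fun i => decide ((i, true) ∈ S), ?_⟩
    rintro ⟨i, b⟩ hb
    rw [mem_assignFace]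
    cases b with
    | true => exact decide_eq_true hb
    | false => exact decide_eq_false fun ht => consistent i ht hb
  · rintro ⟨a, hSa⟩ i ht hf
    have a_true : a i = true := mem_assignFace.1 (hSa ht)
    have a_false : a i = false := mem_assignFace.1 (hSa hf)
    exact Bool.false_ne_true (a_false.symm.trans a_true)

theorem isFace_assignFace_iff : IsFace φ (assignFace a) ↔ Satisfies φ a := by
  have consistent : ∀ i, ¬ pairCircuit i ⊆ assignFace a :=
    forall_not_pairCircuit_subset_iff.2 ⟨a, Finset.Subset.rfl⟩
  simp only [IsFace, Satisfies, clauseDual_subset_assignFace_iff, not_not, and_iff_left consistent]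

theorem isFace_and_card_eq_iff :
    IsFace φ S ∧ S.card = n ↔ ∃ a, Satisfies φ a ∧ assignFace a = S := by
  constructor
  · rintro ⟨hS, hcard⟩
    obtain ⟨a, hSa⟩ := forall_not_pairCircuit_subset_iff.1 hS.2
    obtain rfl : S = assignFace a :=
      Finset.eq_of_subset_of_card_le hSa (by rw [card_assignFace, hcard])
    exact ⟨a, isFace_assignFace_iff.1 hS, rfl⟩
  · rintro ⟨a, ha, rfl⟩
    exact ⟨isFace_assignFace_iff.2 ha, card_assignFace a⟩

end

theorem exists_n_face_iff_satisfiable {n m : ℕ} (φ : Fin m → Finset (Fin n × Bool)) :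
    (∃ S : Finset (Fin n × Bool), IsFace φ S ∧ S.card = n) ↔
      ∃ a : Fin n → Bool, Satisfies φ a := by
  constructor
  · rintro ⟨S, hS⟩
    obtain ⟨a, ha, -⟩ := isFace_and_card_eq_iff.1 hS
    exact ⟨a, ha⟩
  · rintro ⟨a, ha⟩
    exact ⟨assignFace a, isFace_and_card_eq_iff.2 ⟨a, ha, rfl⟩⟩
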